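/- Let g be a Leibniz algebra over a field K and A a commutative associative K-algebra. For multilinear cochains a : gᵖ → A, b : g^q → A, and c : gʳ → A, the shuffle cup product satisfies the zinbiel relation at the cochain level: (a∪b)∪c = a∪(b∪c) + (-1)^{qr} a∪(c∪b). -/

import Mathlib

/-- `σ` is an `(a,b)`-shuffle: a permutation of `{1,…,a+b}` (here `Fin (a+b)`, 0-based)
which is strictly increasing on the first `a` indices and on the last `b` indices. -/
def IsShuffle (a b : ℕ) (σ : Equiv.Perm (Fin (a + b))) : Prop :=
  (∀ i j : Fin (a + b), (i : ℕ) < (j : ℕ) → (j : ℕ) < a → σ i < σ j) ∧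
  (∀ i j : Fin (a + b), (i : ℕ) < (j : ℕ) → a ≤ (i : ℕ) → σ i < σ j)

open scoped Classical

/-- The shuffle cup product of cochains `c : g^{p+1} → A` and `d : g^{q+1} → A` with
values in a commutative associative algebra `A`:
`(c∪d)(x₁,…,x_{p+q+2}) = Σ_σ sgn(σ) c(x₁, x_{1+σ(1)},…,x_{1+σ(p)}) ⬝ d(x_{1+σ(p+1)},…,x_{1+σ(p+q+1)})`,
the sum being over all `(p, q+1)`-shuffles `σ` (0-based indexing in the formula below). -/
noncomputable def cupProd {g A : Type*} [CommRing A] {p q : ℕ}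
    (c : (Fin (p + 1) → g) → A) (d : (Fin (q + 1) → g) → A) :
    (Fin (p + q + 2) → g) → A :=
  fun x => ∑ σ : Equiv.Perm (Fin (p + (q + 1))),
    if IsShuffle p (q + 1) σ then
      ((Equiv.Perm.sign σ : ℤˣ) : ℤ) •
        (c (fun i => if h : (i : ℕ) = 0 then x ⟨0, by omega⟩
              else x ⟨(σ ⟨(i : ℕ) - 1, by omega⟩ : ℕ) + 1, by omega⟩) *
         d (fun j => x ⟨(σ ⟨p + (j : ℕ), by omega⟩ : ℕ) + 1, by omega⟩))
    else 0

/-!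
Every permutation of a linear order factors uniquely as one that is increasing along a prescribed
block followed, on the right, by a permutation supported on that block. Merging the two sums of an
iterated cup product along this factorization gives a single signed sum over shuffles of three
blocks. For `(a ∪ b) ∪ c` all shuffles `τ` occur. The first argument of `b ∪ c` is the first
argument of `b`, so `a ∪ (b ∪ c)` collects exactly those `τ` that place the first argument of `b`
before the first argument of `c`. Exchanging the last two blocks, at the cost of their sign
`(-1) ^ ((q + 1) * (r + 1))`, turns `a ∪ (c ∪ b)` into the sum over the remaining `τ`.
-/

section Factorization

open Equiv

variable {α M : Type*} {m : ℕ}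

lemma strictMono_comp_iff_of_strictMono {ι β γ : Type*} [Preorder ι] [LinearOrder β] [Preorder γ]
    {f : β → γ} (hf : StrictMono f) {g : ι → β} : StrictMono (f ∘ g) ↔ StrictMono g := by
  simp only [StrictMono, Function.comp_apply, hf.lt_iff_lt]

section DecidableEq

variable [DecidableEq α]

lemma mul_viaFintypeEmbedding_comp (e : Fin m ↪ α) (σ : Perm α) (ρ : Perm (Fin m)) :
    ⇑(σ * ρ.viaFintypeEmbedding e) ∘ e = (σ ∘ e) ∘ ρ := by
  ext i
  simp

lemma mul_viaFintypeEmbedding_apply_of_notMem_range (e : Fin m ↪ α) {d : α}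
    (hd : d ∉ Set.range e) (σ : Perm α) (ρ : Perm (Fin m)) :
    (σ * ρ.viaFintypeEmbedding e) d = σ d := by
  rw [Perm.mul_apply, Perm.viaFintypeEmbedding_apply_notMem_range _ _ hd]

lemma mul_viaFintypeEmbedding_comp_of_notMem_range {ι : Type*} (e : Fin m ↪ α) {f : ι → α}
    (hf : ∀ i, f i ∉ Set.range e) (σ : Perm α) (ρ : Perm (Fin m)) :
    ⇑(σ * ρ.viaFintypeEmbedding e) ∘ f = σ ∘ f :=
  funext fun i ↦ mul_viaFintypeEmbedding_apply_of_notMem_range e (hf i) σ ρ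

end DecidableEq

variable [LinearOrder α]

lemma exists_strictMono_comp_mul_viaFintypeEmbedding (e : Fin m ↪ α) (τ : Perm α) :
    ∃ (σ : Perm α) (ρ : Perm (Fin m)), StrictMono (σ ∘ e) ∧ σ * ρ.viaFintypeEmbedding e = τ := by
  set s := Tuple.sort (τ ∘ e)
  refine ⟨τ * s.viaFintypeEmbedding e, s⁻¹, ?_, ?_⟩
  · rw [mul_viaFintypeEmbedding_comp]
    exact (Tuple.monotone_sort _).strictMono_of_injective
      ((τ.injective.comp e.injective).comp s.injective)
  · simp only [Perm.viaFintypeEmbedding, mul_assoc, Perm.extendDomain_mul, mul_inv_cancel,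
      Perm.extendDomain_one, mul_one]

lemma eq_and_eq_of_mul_viaFintypeEmbedding_eq (e : Fin m ↪ α) {σ σ' : Perm α}
    {ρ ρ' : Perm (Fin m)} (hσ : StrictMono (σ ∘ e)) (hσ' : StrictMono (σ' ∘ e))
    (h : σ * ρ.viaFintypeEmbedding e = σ' * ρ'.viaFintypeEmbedding e) : σ = σ' ∧ ρ = ρ' := by
  have hcomp : (σ ∘ e) ∘ ρ = (σ' ∘ e) ∘ ρ' := by
    rw [← mul_viaFintypeEmbedding_comp, h, mul_viaFintypeEmbedding_comp]
  have hσe : σ ∘ e = σ' ∘ e := by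
    rw [← hσ.range_inj hσ', ← ρ.surjective.range_comp, hcomp, ρ'.surjective.range_comp]
  have hρ : ρ = ρ' := by
    rw [hσe] at hcomp
    exact DFunLike.coe_injective (hσ'.injective.comp_left hcomp)
  subst hρ
  exact ⟨mul_right_cancel h, rfl⟩

lemma sum_sum_mul_viaFintypeEmbedding [Fintype α] [AddCommMonoid M] (e : Fin m ↪ α)
    {P R : Perm α → Prop} {Q : Perm (Fin m) → Prop} [DecidablePred P]
    [DecidablePred R] [DecidablePred Q] (hP : ∀ σ, P σ → StrictMono (σ ∘ e))
    (hR : ∀ (σ : Perm α) ρ, StrictMono (σ ∘ e) → (R (σ * ρ.viaFintypeEmbedding e) ↔ P σ ∧ Q ρ))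
    (F : Perm α → M) :
    ∑ σ with P σ, ∑ ρ with Q ρ, F (σ * ρ.viaFintypeEmbedding e) = ∑ τ with R τ, F τ := by
  rw [← Finset.sum_product']
  refine Finset.sum_bij (fun x _ ↦ x.1 * x.2.viaFintypeEmbedding e) ?_ ?_ ?_ fun _ _ ↦ rfl
  · rintro ⟨σ, ρ⟩ hx
    simp only [Finset.mem_product, Finset.mem_filter_univ] at hx ⊢
    exact (hR σ ρ (hP σ hx.1)).2 hx
  · rintro ⟨σ, ρ⟩ hx ⟨σ', ρ'⟩ hx' h
    simp only [Finset.mem_product, Finset.mem_filter_univ] at hx hx'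
    exact Prod.ext_iff.2
      (eq_and_eq_of_mul_viaFintypeEmbedding_eq e (hP σ hx.1) (hP σ' hx'.1) h)
  · intro τ hτ
    obtain ⟨σ, ρ, hσ, rfl⟩ := exists_strictMono_comp_mul_viaFintypeEmbedding e τ
    rw [Finset.mem_filter_univ, hR σ ρ hσ] at hτ
    exact ⟨(σ, ρ), by simpa only [Finset.mem_product, Finset.mem_filter_univ] using hτ, rfl⟩

end Factorization

section BlockShuffle

open Equiv

variable {α ι κ μ g A : Type*}

/-- `σ` is a shuffle of two blocks, given by their inclusions `u` and `v` into the set `α` of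
positions: `σ` is strictly increasing along each of them. -/
def IsShuffle₂ [Preorder α] [Preorder ι] [Preorder κ] (u : ι → α) (v : κ → α)
    (σ : Perm α) : Prop :=
  StrictMono (σ ∘ u) ∧ StrictMono (σ ∘ v)

/-- `τ` is a shuffle of three blocks, in the sense of `IsShuffle₂`. -/
def IsShuffle₃ [Preorder α] [Preorder ι] [Preorder κ] [Preorder μ] (u : ι → α) (v : κ → α)
    (w : μ → α) (τ : Perm α) : Prop :=
  StrictMono (τ ∘ u) ∧ StrictMono (τ ∘ v) ∧ StrictMono (τ ∘ w)

section TripleTerm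

variable [DecidableEq α] [Fintype α] [CommRing A]

/-- The summand at `τ` of an iterated shuffle product of `a`, `b` and `c` along the blocks `u`, `v`
and `w`, evaluated at the tuple `y`. -/
def tripleTerm (u : ι → α) (v : κ → α) (w : μ → α) (a : (ι → g) → A) (b : (κ → g) → A)
    (c : (μ → g) → A) (y : α → g) (τ : Perm α) : A :=
  Perm.sign τ • (a (y ∘ τ ∘ u) * b (y ∘ τ ∘ v) * c (y ∘ τ ∘ w))

lemma tripleTerm_mul (u : ι → α) (v : κ → α) (w : μ → α) (a : (ι → g) → A) (b : (κ → g) → A)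
    (c : (μ → g) → A) (y : α → g) (τ s : Perm α) :
    tripleTerm u w v a c b y (τ * s) =
      Perm.sign s • tripleTerm (s ∘ u) (s ∘ v) (s ∘ w) a b c y τ := by
  rw [tripleTerm, tripleTerm, Perm.sign_mul, mul_comm (Perm.sign τ), mul_smul, mul_right_comm]
  rfl

end TripleTerm

variable [LinearOrder α]

lemma isShuffle₃_mul_viaFintypeEmbedding_left [Preorder ι] [Preorder κ] [Preorder μ]
    {m : ℕ} (e : Fin m ↪ α) {w : μ → α} (hw : ∀ i, w i ∉ Set.range e)
    (u : ι → Fin m) (v : κ → Fin m) {σ : Perm α} (hσ : StrictMono (σ ∘ e)) (ρ : Perm (Fin m)) :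
    IsShuffle₃ (e ∘ u) (e ∘ v) w (σ * ρ.viaFintypeEmbedding e) ↔
      IsShuffle₂ e w σ ∧ IsShuffle₂ u v ρ := by
  simp only [IsShuffle₂, IsShuffle₃, ← Function.comp_assoc, mul_viaFintypeEmbedding_comp,
    mul_viaFintypeEmbedding_comp_of_notMem_range e hw]
  simp only [Function.comp_assoc _ ρ, strictMono_comp_iff_of_strictMono hσ, hσ]
  tauto

lemma isShuffle₃_mul_viaFintypeEmbedding_right [Preorder ι] {m q r : ℕ} (e : Fin m ↪ α)
    {u : ι → α} {d : α} (hu : ∀ i, u i ∉ Set.range e) (hd : d ∉ Set.range e)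
    {v : Fin q → Fin m} {w : Fin (r + 1) → Fin m} (hvw : ∀ k, k ∈ Set.range v ∪ Set.range w)
    {σ : Perm α} (hσ : StrictMono (σ ∘ e)) (ρ : Perm (Fin m)) :
    IsShuffle₃ u (Fin.cons d (e ∘ v)) (e ∘ w) (σ * ρ.viaFintypeEmbedding e) ∧
        (σ * ρ.viaFintypeEmbedding e) d < (σ * ρ.viaFintypeEmbedding e) (e (w 0)) ↔
      IsShuffle₂ u (Fin.cons d e : Fin (m + 1) → α) σ ∧ IsShuffle₂ v w ρ := by
  have hτe (k : Fin m) : (σ * ρ.viaFintypeEmbedding e) (e k) = σ (e (ρ k)) := by simp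
  have hsplit (hw : StrictMono (ρ ∘ w)) : (∀ k, σ d < σ (e k)) ↔
      (∀ i, σ d < σ (e (ρ (v i)))) ∧ σ d < σ (e (ρ (w 0))) := by
    refine ⟨fun h ↦ ⟨fun _ ↦ h _, h _⟩, fun ⟨hv, h0⟩ k ↦ ?_⟩
    obtain ⟨k, rfl⟩ := ρ.surjective k
    obtain ⟨i, rfl⟩ | ⟨j, rfl⟩ := hvw k
    · exact hv i
    · exact h0.trans_le (hσ.monotone (hw.monotone (Fin.zero_le j)))
  have hcomp {k : ℕ} (f : Fin k → Fin m) :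
      ⇑(σ * ρ.viaFintypeEmbedding e) ∘ e ∘ f = (σ ∘ e) ∘ ρ ∘ f := by
    rw [← Function.comp_assoc, mul_viaFintypeEmbedding_comp, Function.comp_assoc]
  simp only [IsShuffle₂, IsShuffle₃, Fin.comp_cons, Fin.strictMono_cons, hcomp, hτe,
    mul_viaFintypeEmbedding_apply_of_notMem_range e hd,
    mul_viaFintypeEmbedding_comp_of_notMem_range e hu, strictMono_comp_iff_of_strictMono hσ,
    Function.comp_apply, hσ]
  tauto

variable [Fintype α]

lemma sum_isShuffle₃_eq_add [Preorder ι] [Preorder κ] [Preorder μ] {M : Type*} [AddCommMonoid M]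
    {u : ι → α} {v : κ → α} {w : μ → α} {i : κ} {j : μ} (hij : v i ≠ w j) (F : Perm α → M) :
    ∑ τ with IsShuffle₃ u v w τ, F τ =
      ∑ τ with IsShuffle₃ u v w τ ∧ τ (v i) < τ (w j), F τ +
        ∑ τ with IsShuffle₃ u v w τ ∧ τ (w j) < τ (v i), F τ := by
  have hlt (τ : Perm α) : τ (w j) < τ (v i) ↔ ¬ τ (v i) < τ (w j) := by
    rw [not_lt, le_iff_lt_or_eq, or_iff_left (τ.injective.ne hij.symm)]
  simp only [hlt, ← Finset.filter_filter]
  exact (Finset.sum_filter_add_sum_filter_not _ _ _).symm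

variable [CommRing A]

/-- The shuffle product of `a` and `b` along the blocks `u` and `v`, evaluated at the tuple `y`: the
cup product is the case of two consecutive blocks, with the first argument of `a` held fixed. -/
noncomputable def shuffleProd [Preorder ι] [Preorder κ] (u : ι → α) (v : κ → α)
    (a : (ι → g) → A) (b : (κ → g) → A) (y : α → g) : A :=
  ∑ σ with IsShuffle₂ u v σ, Perm.sign σ • (a (y ∘ σ ∘ u) * b (y ∘ σ ∘ v))

lemma shuffleProd_shuffleProd_left [Preorder ι] [Preorder κ] [Preorder μ] {m : ℕ} (e : Fin m ↪ α)
    {w : μ → α} (hw : ∀ i, w i ∉ Set.range e) (u : ι → Fin m) (v : κ → Fin m)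
    (a : (ι → g) → A) (b : (κ → g) → A) (c : (μ → g) → A) (y : α → g) :
    shuffleProd e w (shuffleProd u v a b) c y =
      ∑ τ with IsShuffle₃ (e ∘ u) (e ∘ v) w τ, tripleTerm (e ∘ u) (e ∘ v) w a b c y τ := by
  rw [← sum_sum_mul_viaFintypeEmbedding e (fun _ hσ ↦ hσ.1) fun σ ρ hσ ↦
    isShuffle₃_mul_viaFintypeEmbedding_left e hw u v hσ ρ]
  simp only [shuffleProd, Finset.sum_mul, Finset.smul_sum]
  refine Finset.sum_congr rfl fun σ _ ↦ Finset.sum_congr rfl fun ρ _ ↦ ?_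
  rw [tripleTerm, Perm.sign_mul, Perm.viaFintypeEmbedding_sign, mul_smul, smul_mul_assoc,
    mul_viaFintypeEmbedding_comp_of_notMem_range e hw]
  simp only [← Function.comp_assoc _ e, mul_viaFintypeEmbedding_comp]
  rfl

lemma shuffleProd_shuffleProd_right [Preorder ι] {m q r : ℕ} (e : Fin m ↪ α) {u : ι → α} {d : α}
    (hu : ∀ i, u i ∉ Set.range e) (hd : d ∉ Set.range e) {v : Fin q → Fin m}
    {w : Fin (r + 1) → Fin m} (hvw : ∀ k, k ∈ Set.range v ∪ Set.range w) (a : (ι → g) → A)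
    (b : (Fin (q + 1) → g) → A) (c : (Fin (r + 1) → g) → A) (y : α → g) :
    shuffleProd u (Fin.cons d e : Fin (m + 1) → α) a
        (fun z ↦ shuffleProd v w (fun t ↦ b (Fin.cons (z 0) t)) c (Fin.tail z)) y =
      ∑ τ with IsShuffle₃ u (Fin.cons d (e ∘ v) : Fin (q + 1) → α) (e ∘ w) τ ∧ τ d < τ ((e ∘ w) 0),
        tripleTerm u (Fin.cons d (e ∘ v) : Fin (q + 1) → α) (e ∘ w) a b c y τ := by
  rw [← sum_sum_mul_viaFintypeEmbedding e
    (fun _ hσ ↦ (Fin.strictMono_cons.1 (Fin.comp_cons _ _ _ ▸ hσ.2)).2) fun σ ρ hσ ↦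
      isShuffle₃_mul_viaFintypeEmbedding_right e hu hd hvw hσ ρ]
  simp only [shuffleProd, Finset.mul_sum, Finset.smul_sum]
  refine Finset.sum_congr rfl fun σ _ ↦ Finset.sum_congr rfl fun ρ _ ↦ ?_
  rw [tripleTerm, Perm.sign_mul, Perm.viaFintypeEmbedding_sign, mul_smul, mul_smul_comm, mul_assoc,
    mul_viaFintypeEmbedding_comp_of_notMem_range e hu]
  simp only [← Function.comp_assoc _ e, mul_viaFintypeEmbedding_comp, Fin.comp_cons,
    mul_viaFintypeEmbedding_apply_of_notMem_range e hd]
  rfl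

lemma sign_smul_sum_tripleTerm_swap [Preorder ι] {q r : ℕ} {u : ι → α} {v v' : Fin (q + 1) → α}
    {w w' : Fin (r + 1) → α} {s : Perm α} (hu : s ∘ u = u) (hv : s ∘ v' = v) (hw : s ∘ w' = w)
    (a : (ι → g) → A) (b : (Fin (q + 1) → g) → A) (c : (Fin (r + 1) → g) → A) (y : α → g) :
    Perm.sign s • ∑ τ with IsShuffle₃ u w' v' τ ∧ τ (w' 0) < τ (v' 0),
        tripleTerm u w' v' a c b y τ =
      ∑ τ with IsShuffle₃ u v w τ ∧ τ (w 0) < τ (v 0), tripleTerm u v w a b c y τ := by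
  subst hv hw
  rw [Finset.smul_sum]
  symm
  refine Finset.sum_equiv (Equiv.mulRight s) (fun τ ↦ ?_) fun τ _ ↦ ?_
  · rw [Finset.mem_filter_univ, Finset.mem_filter_univ]
    simp only [IsShuffle₃, coe_mulRight, Perm.coe_mul, Function.comp_assoc, hu,
      Function.comp_apply]
    tauto
  · rw [coe_mulRight, tripleTerm_mul, hu, smul_smul, Int.units_mul_self, one_smul]

end BlockShuffle

section Block

open Equiv

/-- The inclusion `i ↦ k + i` of a block of `m` consecutive positions into `Fin n`. -/
def block (k m : ℕ) {n : ℕ} (h : k + m ≤ n := by omega) : Fin m ↪o Fin n :=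
  (Fin.natAddOrderEmb k).trans (Fin.castLEOrderEmb h)

@[simp]
lemma val_block {k m n : ℕ} (h : k + m ≤ n) (i : Fin m) : (block k m h i : ℕ) = k + i := rfl

lemma block_comp_block {k l m m' n : ℕ} (h : k + m ≤ n) (h' : l + m' ≤ m) :
    block k m h ∘ block l m' h' = block (k + l) m' (by omega) := by
  ext i
  simp [add_assoc]

lemma cons_block {k m n : ℕ} (hk : k < n) (h : k + 1 + m ≤ n) :
    (Fin.cons ⟨k, hk⟩ (block (k + 1) m h) : Fin (m + 1) → Fin n) =
      block k (m + 1) (by omega) := by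
  ext i
  cases i using Fin.cases with
  | zero => simp
  | succ i => simp [add_assoc, add_comm 1]

lemma mem_range_block {k m n : ℕ} (h : k + m ≤ n) (i : Fin n) :
    i ∈ Set.range (block k m h) ↔ k ≤ i ∧ i < k + m := by
  refine ⟨?_, fun hi ↦ ⟨⟨i - k, by omega⟩, Fin.ext ?_⟩⟩
  · rintro ⟨j, rfl⟩
    rw [val_block]
    omega
  · rw [val_block]
    dsimp only
    omega

lemma block_notMem_range_block {k l m m' n : ℕ} (h : k + m ≤ n) (h' : l + m' ≤ n)
    (hd : k + m ≤ l ∨ l + m' ≤ k) (i : Fin m) : block k m h i ∉ Set.range (block l m' h') := by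
  rw [mem_range_block, val_block]
  omega

lemma strictMono_comp_block_iff {β : Type*} [Preorder β] {k m n : ℕ} (h : k + m ≤ n)
    (f : Fin n → β) : StrictMono (f ∘ block k m h) ↔
      ∀ i j : Fin n, k ≤ (i : ℕ) → i < j → (j : ℕ) < k + m → f i < f j := by
  refine ⟨fun hf i j hi hij hj ↦ ?_, fun hf i j hij ↦ hf _ _ (by simp) (by simpa) (by simp)⟩
  obtain ⟨i, rfl⟩ := (mem_range_block h i).2 (by omega)
  obtain ⟨j, rfl⟩ := (mem_range_block h j).2 (by omega)
  exact hf ((block k m h).lt_iff_lt.1 hij)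

lemma isShuffle_iff_isShuffle₂ {a b : ℕ} (σ : Perm (Fin (a + b))) :
    IsShuffle a b σ ↔ IsShuffle₂ (block 0 a) (block a b) σ := by
  simp only [IsShuffle, IsShuffle₂, strictMono_comp_block_iff, zero_le, zero_add, Fin.is_lt,
    true_imp_iff, Fin.lt_def]
  tauto

lemma coe_finRotate_pow_apply (n k : ℕ) (i : Fin n) : ((finRotate n ^ k) i : ℕ) = (i + k) % n := by
  induction k with
  | zero => simp [Nat.mod_eq_of_lt]
  | succ k ih =>
    have : NeZero n := i.neZero
    rw [pow_succ', Perm.mul_apply, finRotate_apply, Fin.val_add, ih, Fin.val_one',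
      ← Nat.add_mod, add_assoc]

lemma sign_finRotate_add_pow (k l : ℕ) : Perm.sign (finRotate (k + l) ^ k) = (-1) ^ (k * l) := by
  cases k with
  | zero => simp
  | succ k =>
    have hexp : (k + 1 + l - 1) * (k + 1) = k * (k + 1) + (k + 1) * l := by
      rw [show k + 1 + l - 1 = k + l by omega]
      ring
    rw [map_pow, sign_finRotate, ← pow_mul, hexp, pow_add,
      (Nat.even_mul_succ_self k).neg_one_pow, one_mul]

lemma exists_perm_swap_blocks {p k l n : ℕ} (h : p + k + l = n) :
    ∃ s : Perm (Fin n), Perm.sign s = (-1) ^ (k * l) ∧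
      s ∘ block 0 p = block 0 p ∧ s ∘ block p l = block (p + k) l ∧
      s ∘ block (p + l) k = block p k := by
  let e : Fin (k + l) ↪ Fin n := (block p (k + l)).toEmbedding
  have hs (i : Fin (k + l)) :
      (((finRotate (k + l) ^ k).viaFintypeEmbedding e) (e i) : ℕ) = p + (i + k) % (k + l) := by
    rw [Perm.viaFintypeEmbedding_apply_image]
    simp [e, coe_finRotate_pow_apply]
  refine ⟨(finRotate (k + l) ^ k).viaFintypeEmbedding e, ?_, ?_, ?_, ?_⟩
  · rw [Perm.viaFintypeEmbedding_sign, sign_finRotate_add_pow]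
  · ext i
    exact congrArg _ (Perm.viaFintypeEmbedding_apply_notMem_range _ _
      (block_notMem_range_block _ _ (by omega) i))
  · ext i
    have hi : block p l (by omega) i = e ⟨i, by omega⟩ := rfl
    rw [Function.comp_apply, hi, hs, Nat.mod_eq_of_lt (by dsimp only; omega), val_block]
    dsimp only
    omega
  · ext i
    have hi : block (p + l) k (by omega) i = e ⟨l + i, by omega⟩ := by
      ext
      simp [e, add_assoc]
    rw [Function.comp_apply, hi, hs, Nat.mod_eq_sub_mod (by dsimp only; omega),
      Nat.mod_eq_of_lt (by dsimp only; omega), val_block]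
    dsimp only
    omega

end Block

section CupProduct

open Equiv

variable {g A : Type*} [CommRing A] {p q r n : ℕ}

lemma cupProd_comp_cast (h : p + (q + 1) = n) (c : (Fin (p + 1) → g) → A)
    (d : (Fin (q + 1) → g) → A) (x : Fin (n + 1) → g) :
    cupProd c d (fun i ↦ x (Fin.cast (by omega) i)) =
      shuffleProd (block 0 p) (block p (q + 1)) (fun z ↦ c (Fin.cons (x 0) z)) d (Fin.tail x) := by
  subst h
  rw [cupProd, ← Finset.sum_filter, shuffleProd]
  simp only [isShuffle_iff_isShuffle₂]
  refine Finset.sum_congr rfl fun σ _ ↦ ?_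
  rw [Units.smul_def]
  congr 3
  ext i
  cases i using Fin.cases with
  | zero => rfl
  | succ i =>
    exact (dif_neg i.val.succ_ne_zero).trans
      (congrArg (fun k ↦ x (σ k).succ) (Fin.ext (zero_add _).symm))

lemma cupProd_eq_shuffleProd (c : (Fin (p + 1) → g) → A) (d : (Fin (q + 1) → g) → A) :
    cupProd c d = fun x ↦ shuffleProd (α := Fin (p + (q + 1))) (block 0 p) (block p (q + 1))
      (fun z ↦ c (Fin.cons (x 0) z)) d (Fin.tail x) :=
  funext (cupProd_comp_cast rfl c d)

lemma cupProd_cupProd_left (h : p + (q + 1) + (r + 1) = n) (a : (Fin (p + 1) → g) → A)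
    (b : (Fin (q + 1) → g) → A) (c : (Fin (r + 1) → g) → A) (x : Fin (n + 1) → g) :
    cupProd (p := p + q + 1) (cupProd a b) c (fun i ↦ x (Fin.cast (by omega) i)) =
      ∑ τ : Perm (Fin n) with
          IsShuffle₃ (block 0 p) (block p (q + 1)) (block (p + (q + 1)) (r + 1)) τ,
        tripleTerm (block 0 p) (block p (q + 1)) (block (p + (q + 1)) (r + 1))
          (fun z ↦ a (Fin.cons (x 0) z)) b c (Fin.tail x) τ := by
  have hfactor := shuffleProd_shuffleProd_left
    (block 0 (p + (q + 1)) (by omega) : _ ↪o Fin n).toEmbedding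
    (block_notMem_range_block (k := p + (q + 1)) (m := r + 1) (by omega) (by omega) (by omega))
    (block 0 p) (block p (q + 1)) (fun z ↦ a (Fin.cons (x 0) z)) b c (Fin.tail x)
  simp only [RelEmbedding.coe_toEmbedding, block_comp_block, zero_add] at hfactor
  rw [cupProd_comp_cast (by omega), cupProd_eq_shuffleProd, ← hfactor]
  rfl

lemma cupProd_cupProd_right (h : p + (q + 1) + (r + 1) = n) (a : (Fin (p + 1) → g) → A)
    (b : (Fin (q + 1) → g) → A) (c : (Fin (r + 1) → g) → A) (x : Fin (n + 1) → g) :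
    cupProd (q := q + r + 1) a (cupProd b c) (fun i ↦ x (Fin.cast (by omega) i)) =
      ∑ τ : Perm (Fin n) with
          IsShuffle₃ (block 0 p) (block p (q + 1)) (block (p + (q + 1)) (r + 1)) τ ∧
          τ (block p (q + 1) (by omega) 0) < τ (block (p + (q + 1)) (r + 1) (by omega) 0),
        tripleTerm (block 0 p) (block p (q + 1)) (block (p + (q + 1)) (r + 1))
          (fun z ↦ a (Fin.cons (x 0) z)) b c (Fin.tail x) τ := by
  have hp : (⟨p, by omega⟩ : Fin n) ∉ Set.range (block (p + 1) (q + (r + 1))) := by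
    simp only [mem_range_block]
    omega
  have hfactor := shuffleProd_shuffleProd_right
    (block (p + 1) (q + (r + 1)) (by omega) : _ ↪o Fin n).toEmbedding
    (block_notMem_range_block (k := 0) (m := p) (by omega) (by omega) (by omega)) hp
    (v := block 0 q) (w := block q (r + 1))
    (fun k ↦ by simp only [Set.mem_union, mem_range_block]; omega)
    (fun z ↦ a (Fin.cons (x 0) z)) b c (Fin.tail x)
  simp only [RelEmbedding.coe_toEmbedding, block_comp_block, add_zero, cons_block,
    add_right_comm p 1 q] at hfactor
  rw [cupProd_comp_cast (by omega), cupProd_eq_shuffleProd]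
  exact hfactor

theorem cupProd_zinbiel_general (h : p + (q + 1) + (r + 1) = n) (a : (Fin (p + 1) → g) → A)
    (b : (Fin (q + 1) → g) → A) (c : (Fin (r + 1) → g) → A) (x : Fin (n + 1) → g) :
    cupProd (p := p + q + 1) (q := r) (cupProd a b) c (fun i ↦ x (Fin.cast (by omega) i)) =
      cupProd (p := p) (q := q + r + 1) a (cupProd b c) (fun i ↦ x (Fin.cast (by omega) i)) +
        ((-1 : ℤ) ^ ((q + 1) * (r + 1))) •
          cupProd (p := p) (q := r + q + 1) a (cupProd c b)
            (fun i ↦ x (Fin.cast (by omega) i)) := by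
  obtain ⟨s, hsign, hu, hw, hv⟩ := exists_perm_swap_blocks h
  have hsmul (y : A) : ((-1 : ℤ) ^ ((q + 1) * (r + 1))) • y = Perm.sign s • y := by
    rw [hsign, Units.smul_def]
    simp
  rw [cupProd_cupProd_left h, cupProd_cupProd_right h,
    cupProd_cupProd_right (by omega), hsmul, sign_smul_sum_tripleTerm_swap hu hv hw]
  exact sum_isShuffle₃_eq_add (Fin.ne_of_val_ne (by simp)) _

end CupProduct

/-- For a Leibniz algebra `g` over a field `K` and a commutative associative `K`-algebra
`A`, the shuffle cup product satisfies the (graded) zinbiel relation at the cochain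
level: `(a∪b)∪c = a∪(b∪c) + (-1)^{q'r'} a∪(c∪b)`, where `q' = q+1` and `r' = r+1` are the
degrees of the cochains `b : g^{q+1} → A` and `c : g^{r+1} → A`. -/
theorem cupProd_zinbiel
    {K : Type*} [Field K] {g : Type*} [AddCommGroup g] [Module K g]
    {A : Type*} [CommRing A] [Algebra K A]
    (br : g →ₗ[K] g →ₗ[K] g)
    (hleib : ∀ x y z : g, br x (br y z) = br (br x y) z - br (br x z) y)
    {p q r : ℕ}
    (a : MultilinearMap K (fun _ : Fin (p + 1) => g) A)
    (b : MultilinearMap K (fun _ : Fin (q + 1) => g) A)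
    (c : MultilinearMap K (fun _ : Fin (r + 1) => g) A) :
    ∀ x : Fin (p + q + r + 3) → g,
      cupProd (p := p + q + 1) (q := r) (cupProd ⇑a ⇑b) ⇑c
          (fun i : Fin (p + q + 1 + r + 2) => x (Fin.cast (by omega) i)) =
        cupProd (p := p) (q := q + r + 1) ⇑a (cupProd ⇑b ⇑c)
            (fun i : Fin (p + (q + r + 1) + 2) => x (Fin.cast (by omega) i)) +
          ((-1 : ℤ) ^ ((q + 1) * (r + 1))) •
            cupProd (p := p) (q := r + q + 1) ⇑a (cupProd ⇑c ⇑b)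
              (fun i : Fin (p + (r + q + 1) + 2) => x (Fin.cast (by omega) i)) :=
  fun x ↦ cupProd_zinbiel_general (by omega) a b c x
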